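/- Let A = (A_1, …, A_N) and B = (B_1, …, B_N) be N-outcome POVMs on ℂ^d. Define the depolarizing-noise incompatibility robustness α*_d as the supremum of all α ∈ [0,1] such that there exist positive semidefinite matrices C_{ij} ∈ M_d(ℂ) with Σ_{j=1}^{N} C_{ij} = α A_i + (1−α) (Tr[A_i]/d) I_d for all i and Σ_{i=1}^{N} C_{ij} = α B_j + (1−α) (Tr[B_j]/d) I_d for all j. Then α*_d equals the infimum, over Hermitian matrices X_1, …, X_N, Y_1, …, Y_N ∈ M_d(ℂ) satisfying X_i + Y_j ≥ 0 for all i, j and 1 + Σ_{i=1}^{N} Tr[X_i A_i] + Σ_{j=1}^{N} Tr[Y_j B_j] ≥ Σ_{i=1}^{N} Tr[X_i] Tr[A_i]/d + Σ_{j=1}^{N} Tr[Y_j] Tr[B_j]/d, of the quantity 1 + Σ_{i=1}^{N} Tr[X_i A_i] + Σ_{j=1}^{N} Tr[Y_j B_j]. -/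

import Mathlib

open Matrix
open scoped ComplexOrder

/-!
The depolarized POVMs are compatible, with joint POVM `(Tr[A_i] / d) (Tr[B_j] / d) I`, so the
robustness measures how far one can travel from a point `e` of a cone `K` towards a point `a`
before leaving `K`, where `K` is the cone of all pairs of marginals of positive families.
If `t • a + (1 - t) • e` lies outside `K`, a functional separates it from `K`; rescaled so that its
value at `a` is `t - 1`, this functional is a dual feasible point of value `t`.

This requires `K` to be closed. In a C⋆-algebra `0 ≤ C i j ≤ ∑ j, C i j` implies
`‖C i j‖ ≤ ‖∑ j, C i j‖`, so a positive family is bounded by its marginals, and closedness follows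
from compactness in finite dimension. Finally, the trace pairing turns the dual cone of `K` into the
pairs `(X, Y)` with `X i + Y j ≥ 0`.
-/

section ConicDuality

variable {E : Type*} [AddCommGroup E] [Module ℝ E] [TopologicalSpace E] [IsTopologicalAddGroup E]
  [ContinuousSMul ℝ E] [LocallyConvexSpace ℝ E] {K : ProperCone ℝ E} {a e : E}

lemma exists_dual_eq_of_segment_notMem (he : e ∈ K) {t : ℝ} (ht₀ : 0 ≤ t) (ht₁ : t < 1)
    (ht : t • a + (1 - t) • e ∉ K) :
    ∃ f : StrongDual ℝ E, (∀ x ∈ K, 0 ≤ f x) ∧ f e ≤ 1 + f a ∧ 1 + f a = t := by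
  obtain ⟨g, hgK, hg⟩ := K.hyperplane_separation_point ht
  have hg_segment : t * g a + (1 - t) * g e < 0 := by simpa using hg
  have hge : 0 ≤ (1 - t) * g e := mul_nonneg (sub_nonneg.2 ht₁.le) (hgK e he)
  have hga : g a < 0 := by
    by_contra! h
    linarith [mul_nonneg ht₀ h]
  have hc : 0 ≤ (1 - t) / -g a := div_nonneg (sub_nonneg.2 ht₁.le) (neg_nonneg.2 hga.le)
  have hca : (1 - t) / -g a * g a = t - 1 := by
    rw [div_neg, neg_mul, div_mul_cancel₀ _ hga.ne, neg_sub]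
  have hce : (1 - t) / -g a * g e ≤ t := by
    rw [div_mul_eq_mul_div, div_le_iff₀ (neg_pos.2 hga)]
    linarith
  refine ⟨((1 - t) / -g a) • g, fun x hx ↦ mul_nonneg hc (hgK x hx), ?_, ?_⟩ <;>
    simp only [_root_.smul_apply, smul_eq_mul] <;> linarith

theorem sSup_segment_mem_cone_eq_sInf_dual (he : e ∈ K) :
    sSup {t : ℝ | 0 ≤ t ∧ t ≤ 1 ∧ t • a + (1 - t) • e ∈ K} =
      sInf {r : ℝ | ∃ f : StrongDual ℝ E,
        (∀ x ∈ K, 0 ≤ f x) ∧ f e ≤ 1 + f a ∧ r = 1 + f a} := by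
  set S := {t : ℝ | 0 ≤ t ∧ t ≤ 1 ∧ t • a + (1 - t) • e ∈ K}
  set T := {r : ℝ | ∃ f : StrongDual ℝ E, (∀ x ∈ K, 0 ≤ f x) ∧ f e ≤ 1 + f a ∧ r = 1 + f a}
  have zero_mem : 0 ∈ S := by simpa [S] using he
  have one_mem : 1 ∈ T := ⟨0, by simp⟩
  have weak_duality : ∀ t ∈ S, ∀ r ∈ T, t ≤ r := by
    rintro t ⟨-, ht₁, ht⟩ r ⟨f, hfK, hfe, rfl⟩
    have hf_segment : 0 ≤ t * f a + (1 - t) * f e := by simpa using hfK _ ht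
    linarith [mul_le_mul_of_nonneg_left hfe (sub_nonneg.2 ht₁)]
  have hS : BddAbove S := ⟨1, fun t ht ↦ ht.2.1⟩
  have hT : BddBelow T := ⟨0, weak_duality 0 zero_mem⟩
  refine le_antisymm
    (csSup_le ⟨0, zero_mem⟩ fun t ht ↦ le_csInf ⟨1, one_mem⟩ (weak_duality t ht))
    (le_of_forall_gt_imp_ge_of_dense fun t ht ↦ ?_)
  obtain ht₁ | ht₁ := le_or_gt 1 t
  · exact (csInf_le hT one_mem).trans ht₁
  have ht₀ : 0 ≤ t := (le_csSup hS zero_mem).trans ht.le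
  have htK : t • a + (1 - t) • e ∉ K := fun h ↦ ht.not_ge (le_csSup hS ⟨ht₀, ht₁.le, h⟩)
  obtain ⟨f, hfK, hfe, hfa⟩ := exists_dual_eq_of_segment_notMem he ht₀ ht₁ htK
  exact csInf_le hT ⟨f, hfK, hfe, hfa.symm⟩

end ConicDuality

section Marginals

open Bornology Filter

lemma isClosed_image_of_tendsto_cobounded {E F : Type*} [PseudoMetricSpace E] [ProperSpace E]
    [MetricSpace F] {s : Set E} (hs : IsClosed s) {f : E → F} (hf : ContinuousOn f s)
    (hcoercive : Tendsto f (cobounded E ⊓ 𝓟 s) (cobounded F)) : IsClosed (f '' s) := by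
  have hproper : IsProperMap (s.domRestrict f) := by
    refine isProperMap_iff_tendsto_cocompact.2 ⟨hf.domRestrict, ?_⟩
    refine (hcoercive.comp (tendsto_inf.2 ⟨?_, ?_⟩)).mono_right Metric.cobounded_le_cocompact
    · rw [Metric.cobounded_eq_cocompact]
      exact hs.isClosedEmbedding_subtypeVal.tendsto_cocompact
    · exact tendsto_principal.2 (.of_forall Subtype.property)
  rw [← Set.range_domRestrict]
  exact hproper.isClosedMap.isClosed_range

variable {ι κ : Type*} [Fintype ι] [Fintype κ]

variable (ι κ) in
/-- The two families of marginals `(∑ j, C i j)_i` and `(∑ i, C i j)_j` of a doubly indexed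
family `C`. -/
def marginals (M : Type*) [AddCommGroup M] [Module ℝ M] :
    (ι → κ → M) →ₗ[ℝ] (ι → M) × (κ → M) where
  toFun C := (fun i ↦ ∑ j, C i j, fun j ↦ ∑ i, C i j)
  map_add' C D := by ext <;> simp [Finset.sum_add_distrib]
  map_smul' c C := by ext <;> simp [Finset.smul_sum]

variable {A : Type*} [CStarAlgebra A] [PartialOrder A] [StarOrderedRing A]

lemma norm_le_norm_marginals {C : ι → κ → A} (hC : 0 ≤ C) : ‖C‖ ≤ ‖marginals ι κ A C‖ := by
  refine (pi_norm_le_iff_of_nonneg (norm_nonneg _)).2 fun i ↦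
    (pi_norm_le_iff_of_nonneg (norm_nonneg _)).2 fun j ↦ ?_
  calc ‖C i j‖ ≤ ‖∑ j, C i j‖ := CStarAlgebra.norm_le_norm_of_nonneg_of_le (hC i j)
        (Finset.single_le_sum (fun j _ ↦ hC i j) (Finset.mem_univ j))
    _ ≤ ‖(marginals ι κ A C).1‖ := norm_le_pi_norm (marginals ι κ A C).1 i
    _ ≤ ‖marginals ι κ A C‖ := norm_fst_le _

variable [FiniteDimensional ℂ A]

lemma isClosed_marginals_image_nonneg : IsClosed (marginals ι κ A '' Set.Ici 0) := by
  have : ProperSpace A := FiniteDimensional.proper ℂ A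
  have : FiniteDimensional ℝ A := FiniteDimensional.complexToReal A
  refine isClosed_image_of_tendsto_cobounded isClosed_Ici
    (marginals ι κ A).continuous_of_finiteDimensional.continuousOn
    (tendsto_norm_atTop_iff_cobounded.1 ?_)
  refine tendsto_atTop_mono' _ ?_ (tendsto_norm_cobounded_atTop.mono_left inf_le_left)
  exact mem_inf_of_right fun C hC ↦ norm_le_norm_marginals hC

variable (ι κ A) in
/-- The closed convex cone of pairs of families that are the marginals of a common family of
positive elements: two POVMs are compatible exactly when they form a point of this cone. -/
noncomputable def marginalCone : ProperCone ℝ ((ι → A) × (κ → A)) where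
  toSubmodule := (PointedCone.positive ℝ (ι → κ → A)).map (marginals ι κ A)
  isClosed' := isClosed_marginals_image_nonneg

lemma mem_marginalCone_iff_exists_marginals_eq {p : (ι → A) × (κ → A)} :
    p ∈ marginalCone ι κ A ↔ ∃ C, 0 ≤ C ∧ marginals ι κ A C = p := Iff.rfl

lemma mem_marginalCone_iff_exists_sum_eq {P : ι → A} {Q : κ → A} :
    (P, Q) ∈ marginalCone ι κ A ↔
      ∃ C : ι → κ → A, (∀ i j, 0 ≤ C i j) ∧ (∀ i, ∑ j, C i j = P i) ∧ ∀ j, ∑ i, C i j = Q j := by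
  simp [mem_marginalCone_iff_exists_marginals_eq, marginals, funext_iff, Pi.le_def]

end Marginals

section TracePairing

variable {n : Type*} [Fintype n]

lemma trace_mul_vecMulVec_star (X : Matrix n n ℂ) (v : n → ℂ) :
    (X * vecMulVec v (star v)).trace = star v ⬝ᵥ (X *ᵥ v) := by
  rw [Matrix.mul_vecMulVec, Matrix.trace_vecMulVec, dotProduct_comm]

lemma posSemidef_iff_forall_re_trace_mul_nonneg {X : Matrix n n ℂ} (hX : X.IsHermitian) :
    X.PosSemidef ↔ ∀ M : Matrix n n ℂ, M.PosSemidef → 0 ≤ ((X * M).trace).re := by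
  refine ⟨fun h M hM ↦ ?_, fun h ↦ .of_dotProduct_mulVec_nonneg hX fun v ↦ ?_⟩
  · obtain ⟨m, v, rfl⟩ := Matrix.posSemidef_iff_eq_sum_vecMulVec.1 hM
    simp only [Matrix.mul_sum, Matrix.trace_sum, trace_mul_vecMulVec_star, Complex.re_sum]
    exact Finset.sum_nonneg fun k _ ↦ (Complex.nonneg_iff.1 (h.dotProduct_mulVec_nonneg (v k))).1
  · refine Complex.nonneg_iff.2 ⟨?_, (hX.im_star_dotProduct_mulVec_self v).symm⟩
    simpa only [trace_mul_vecMulVec_star] using h _ (Matrix.posSemidef_vecMulVec_self_star v)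

lemma re_trace_conjTranspose_mul_of_isHermitian (Z : Matrix n n ℂ) {M : Matrix n n ℂ}
    (hM : M.IsHermitian) : ((Zᴴ * M).trace).re = ((Z * M).trace).re := by
  rw [← hM.eq, ← Matrix.conjTranspose_mul, Matrix.trace_conjTranspose, Matrix.trace_mul_comm, hM.eq]
  simp

lemma exists_eq_re_trace_mul (f : Matrix n n ℂ →ₗ[ℝ] ℝ) :
    ∃ Z : Matrix n n ℂ, ∀ M, f M = ((Z * M).trace).re := by
  let Φ : Matrix n n ℂ →ₗ[ℝ] Module.Dual ℝ (Matrix n n ℂ) :=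
    LinearMap.compr₂ (LinearMap.mul ℝ (Matrix n n ℂ))
      (Complex.reLm ∘ₗ Matrix.traceLinearMap n ℝ ℂ)
  have hΦ : Function.Injective Φ := by
    refine (injective_iff_map_eq_zero Φ).2 fun Z hZ ↦ ?_
    have hZZ : ((Z * Zᴴ).trace).re = 0 := congr($hZ Zᴴ)
    have hZZ_nonneg := (Matrix.posSemidef_self_mul_conjTranspose Z).trace_nonneg
    exact Matrix.trace_mul_conjTranspose_self_eq_zero_iff.1
      (Complex.ext hZZ (Complex.nonneg_iff.1 hZZ_nonneg).2.symm)
  obtain ⟨Z, rfl⟩ := (LinearMap.injective_iff_surjective_of_finrank_eq_finrank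
    Subspace.dual_finrank_eq.symm).1 hΦ f
  exact ⟨Z, fun M ↦ rfl⟩

lemma exists_isHermitian_eq_re_trace_mul (f : Matrix n n ℂ →ₗ[ℝ] ℝ) :
    ∃ X : Matrix n n ℂ, X.IsHermitian ∧
      ∀ M : Matrix n n ℂ, M.IsHermitian → f M = ((X * M).trace).re := by
  obtain ⟨Z, hZ⟩ := exists_eq_re_trace_mul f
  refine ⟨(2⁻¹ : ℝ) • (Z + Zᴴ), (Matrix.isHermitian_add_transpose_self Z).smul (.all _),
    fun M hM ↦ ?_⟩
  rw [smul_mul_assoc, Matrix.trace_smul, Complex.smul_re, add_mul, Matrix.trace_add, Complex.add_re,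
    re_trace_conjTranspose_mul_of_isHermitian Z hM, ← hZ, smul_eq_mul]
  ring

variable {ι κ : Type*} [Fintype ι] [Fintype κ]

/-- The real functional `(P, Q) ↦ Re (∑ i, Tr[X i * P i] + ∑ j, Tr[Y j * Q j])` given by the dual
variables `X` and `Y`. Real parts make it `ℝ`-valued on all matrices; the traces are real
on Hermitian ones. -/
def tracePairing (X : ι → Matrix n n ℂ) (Y : κ → Matrix n n ℂ) :
    (ι → Matrix n n ℂ) × (κ → Matrix n n ℂ) →ₗ[ℝ] ℝ where
  toFun p := ∑ i, ((X i * p.1 i).trace).re + ∑ j, ((Y j * p.2 j).trace).re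
  map_add' p q := by simp [mul_add, Finset.sum_add_distrib, add_add_add_comm]
  map_smul' c p := by simp [mul_add, Finset.mul_sum]

lemma tracePairing_apply (X : ι → Matrix n n ℂ) (Y : κ → Matrix n n ℂ)
    (P : ι → Matrix n n ℂ) (Q : κ → Matrix n n ℂ) : tracePairing X Y (P, Q) =
      ∑ i, ((X i * P i).trace).re + ∑ j, ((Y j * Q j).trace).re := rfl

lemma tracePairing_marginals (X : ι → Matrix n n ℂ) (Y : κ → Matrix n n ℂ)
    (C : ι → κ → Matrix n n ℂ) :
    tracePairing X Y (marginals ι κ _ C) = ∑ i, ∑ j, (((X i + Y j) * C i j).trace).re := by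
  simp only [marginals, LinearMap.coe_mk, AddHom.coe_mk, tracePairing_apply, Matrix.mul_sum,
    Matrix.trace_sum, Complex.re_sum, add_mul, Matrix.trace_add, Complex.add_re,
    Finset.sum_add_distrib, add_right_inj]
  exact Finset.sum_comm

lemma exists_isHermitian_eq_sum_re_trace_mul (f : (ι → Matrix n n ℂ) →ₗ[ℝ] ℝ) :
    ∃ X : ι → Matrix n n ℂ, (∀ i, (X i).IsHermitian) ∧
      ∀ P : ι → Matrix n n ℂ, (∀ i, (P i).IsHermitian) → f P = ∑ i, ((X i * P i).trace).re := by
  classical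
  choose X hX hfX using fun i ↦ exists_isHermitian_eq_re_trace_mul
    (f ∘ₗ LinearMap.single ℝ (fun _ ↦ Matrix n n ℂ) i)
  refine ⟨X, hX, fun P hP ↦ ?_⟩
  conv_lhs => rw [← Finset.univ_sum_single P, map_sum]
  exact Finset.sum_congr rfl fun i _ ↦ hfX i (P i) (hP i)

lemma exists_isHermitian_eq_tracePairing
    (f : (ι → Matrix n n ℂ) × (κ → Matrix n n ℂ) →ₗ[ℝ] ℝ) :
    ∃ (X : ι → Matrix n n ℂ) (Y : κ → Matrix n n ℂ),
      (∀ i, (X i).IsHermitian) ∧ (∀ j, (Y j).IsHermitian) ∧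
      ∀ P Q, (∀ i, (P i).IsHermitian) → (∀ j, (Q j).IsHermitian) →
        f (P, Q) = tracePairing X Y (P, Q) := by
  obtain ⟨X, hX, hfX⟩ := exists_isHermitian_eq_sum_re_trace_mul (f ∘ₗ LinearMap.inl ℝ _ _)
  obtain ⟨Y, hY, hfY⟩ := exists_isHermitian_eq_sum_re_trace_mul (f ∘ₗ LinearMap.inr ℝ _ _)
  refine ⟨X, Y, hX, hY, fun P Q hP hQ ↦ ?_⟩
  rw [tracePairing_apply, ← hfX P hP, ← hfY Q hQ, LinearMap.comp_apply, LinearMap.comp_apply,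
    ← map_add, LinearMap.inl_apply, LinearMap.inr_apply, Prod.mk_add_mk, add_zero, zero_add]

end TracePairing

section Robustness

open scoped Matrix.Norms.L2Operator MatrixOrder

variable {n ι κ : Type*} [Fintype n] [DecidableEq n] [Fintype ι] [Fintype κ]

lemma isHermitian_of_mem_marginalCone {P : ι → Matrix n n ℂ} {Q : κ → Matrix n n ℂ}
    (h : (P, Q) ∈ marginalCone ι κ (Matrix n n ℂ)) :
    (∀ i, (P i).IsHermitian) ∧ ∀ j, (Q j).IsHermitian := by
  obtain ⟨C, hC, hP, hQ⟩ := mem_marginalCone_iff_exists_sum_eq.1 h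
  have hP_nonneg (i) : 0 ≤ P i := hP i ▸ Finset.sum_nonneg fun j _ ↦ hC i j
  have hQ_nonneg (j) : 0 ≤ Q j := hQ j ▸ Finset.sum_nonneg fun i _ ↦ hC i j
  exact ⟨fun i ↦ (hP_nonneg i).posSemidef.isHermitian, fun j ↦ (hQ_nonneg j).posSemidef.isHermitian⟩

lemma tracePairing_nonneg_on_marginalCone_iff
    {X : ι → Matrix n n ℂ} {Y : κ → Matrix n n ℂ}
    (hX : ∀ i, (X i).IsHermitian) (hY : ∀ j, (Y j).IsHermitian) :
    (∀ p ∈ marginalCone ι κ (Matrix n n ℂ), 0 ≤ tracePairing X Y p) ↔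
      ∀ i j, (X i + Y j).PosSemidef := by
  classical
  constructor
  · refine fun h i j ↦ (posSemidef_iff_forall_re_trace_mul_nonneg ((hX i).add (hY j))).2
      fun M hM ↦ ?_
    have hC : 0 ≤ Pi.single (M := fun _ : ι ↦ κ → Matrix n n ℂ) i (Pi.single j M) :=
      Pi.single_nonneg.2 (Pi.single_nonneg.2 hM.nonneg)
    have hpair := h _ (mem_marginalCone_iff_exists_marginals_eq.2 ⟨_, hC, rfl⟩)
    rwa [tracePairing_marginals, Finset.sum_eq_single i (by simp +contextual) (by simp),
      Finset.sum_eq_single j (by simp +contextual) (by simp), Pi.single_eq_same,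
      Pi.single_eq_same] at hpair
  · intro hXY p hp
    obtain ⟨C, hC, rfl⟩ := mem_marginalCone_iff_exists_marginals_eq.1 hp
    rw [tracePairing_marginals]
    exact Finset.sum_nonneg fun i _ ↦ Finset.sum_nonneg fun j _ ↦
      (posSemidef_iff_forall_re_trace_mul_nonneg (hXY i j).isHermitian).1 (hXY i j) _
        (hC i j).posSemidef

theorem sSup_compatible_eq_sInf_tracePairing {A E : ι → Matrix n n ℂ}
    {B F : κ → Matrix n n ℂ} (hA : ∀ i, (A i).IsHermitian) (hB : ∀ j, (B j).IsHermitian)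
    (hEF : (E, F) ∈ marginalCone ι κ (Matrix n n ℂ)) :
    sSup {α : ℝ | 0 ≤ α ∧ α ≤ 1 ∧
        α • (A, B) + (1 - α) • (E, F) ∈ marginalCone ι κ (Matrix n n ℂ)} =
      sInf {r : ℝ | ∃ (X : ι → Matrix n n ℂ) (Y : κ → Matrix n n ℂ),
        (∀ i, (X i).IsHermitian) ∧ (∀ j, (Y j).IsHermitian) ∧ (∀ i j, (X i + Y j).PosSemidef) ∧
        tracePairing X Y (E, F) ≤ 1 + tracePairing X Y (A, B) ∧
        r = 1 + tracePairing X Y (A, B)} := by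
  rw [sSup_segment_mem_cone_eq_sInf_dual hEF]
  congr! 3 with r
  constructor
  · rintro ⟨f, hf, hfEF, rfl⟩
    obtain ⟨X, Y, hX, hY, hfXY⟩ := exists_isHermitian_eq_tracePairing f.toLinearMap
    obtain ⟨hE, hF⟩ := isHermitian_of_mem_marginalCone hEF
    have hf_AB : f (A, B) = tracePairing X Y (A, B) := hfXY A B hA hB
    have hf_EF : f (E, F) = tracePairing X Y (E, F) := hfXY E F hE hF
    refine ⟨X, Y, hX, hY, (tracePairing_nonneg_on_marginalCone_iff hX hY).1 fun p hp ↦ ?_, ?_, ?_⟩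
    · obtain ⟨hP, hQ⟩ := isHermitian_of_mem_marginalCone hp
      exact (hf p hp).trans_eq (hfXY p.1 p.2 hP hQ)
    · rwa [← hf_AB, ← hf_EF]
    · rw [← hf_AB]
  · rintro ⟨X, Y, hX, hY, hXY, hEF_le, rfl⟩
    exact ⟨(tracePairing X Y).toContinuousLinearMap,
      (tracePairing_nonneg_on_marginalCone_iff hX hY).2 hXY, hEF_le, rfl⟩

/-- The image `(Tr[M] / d) I` of `M` under the completely depolarizing channel, `d` being the
dimension. -/
noncomputable def depolarized (M : Matrix n n ℂ) : Matrix n n ℂ :=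
  (M.trace / Fintype.card n) • 1

lemma coe_smul_add_smul_one_eq_depolarized (α : ℝ) (M : Matrix n n ℂ) :
    (α : ℂ) • M + (((1 - α : ℝ) : ℂ) * (M.trace / (Fintype.card n : ℂ))) • 1 =
      α • M + (1 - α) • depolarized M := by
  rw [depolarized, mul_smul, Complex.coe_smul, Complex.coe_smul]

lemma depolarized_mem_marginalCone [Nonempty n] {A : ι → Matrix n n ℂ}
    {B : κ → Matrix n n ℂ} (hA : ∀ i, 0 ≤ (A i).trace)
    (hAsum : ∑ i, (A i).trace = Fintype.card n) (hB : ∀ j, 0 ≤ (B j).trace)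
    (hBsum : ∑ j, (B j).trace = Fintype.card n) :
    (fun i ↦ depolarized (A i), fun j ↦ depolarized (B j)) ∈ marginalCone ι κ (Matrix n n ℂ) := by
  have hcard : (Fintype.card n : ℂ) ≠ 0 := Nat.cast_ne_zero.2 Fintype.card_ne_zero
  refine mem_marginalCone_iff_exists_sum_eq.2
    ⟨fun i j ↦ ((A i).trace / Fintype.card n * ((B j).trace / Fintype.card n)) • 1,
      fun i j ↦ (Matrix.PosSemidef.one.smul ?_).nonneg, fun i ↦ ?_, fun j ↦ ?_⟩
  · exact mul_nonneg (div_nonneg (hA i) (Nat.cast_nonneg _))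
      (div_nonneg (hB j) (Nat.cast_nonneg _))
  · rw [← Finset.sum_smul, ← Finset.mul_sum, ← Finset.sum_div, hBsum, div_self hcard, mul_one,
      depolarized]
  · rw [← Finset.sum_smul, ← Finset.sum_mul, ← Finset.sum_div, hAsum, div_self hcard, one_mul,
      depolarized]

lemma re_trace_mul_depolarized (X : Matrix n n ℂ) {M : Matrix n n ℂ}
    (hM : M.IsHermitian) : ((X * depolarized M).trace).re =
      X.trace.re * M.trace.re / Fintype.card n := by
  have hM_im : M.trace.im = 0 := Complex.conj_eq_iff_im.1 <| by
    rw [starRingEnd_apply, ← Matrix.trace_conjTranspose, hM.eq]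
  rw [depolarized, mul_smul_comm, mul_one, Matrix.trace_smul, smul_eq_mul, Complex.mul_re,
    Complex.div_natCast_re, Complex.div_natCast_im, hM_im]
  ring

theorem stmt_16_general [Nonempty n] (A : ι → Matrix n n ℂ) (B : κ → Matrix n n ℂ)
    (hA : ∀ i, (A i).IsHermitian) (hAtrace : ∀ i, 0 ≤ (A i).trace)
    (hAsum : ∑ i, (A i).trace = Fintype.card n)
    (hB : ∀ j, (B j).IsHermitian) (hBtrace : ∀ j, 0 ≤ (B j).trace)
    (hBsum : ∑ j, (B j).trace = Fintype.card n) :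
    sSup {α : ℝ | 0 ≤ α ∧ α ≤ 1 ∧
        ∃ C : ι → κ → Matrix n n ℂ,
          (∀ i j, (C i j).PosSemidef) ∧
          (∀ i, ∑ j, C i j = (α : ℂ) • A i +
            (((1 - α : ℝ) : ℂ) * ((A i).trace / (Fintype.card n : ℂ))) • 1) ∧
          (∀ j, ∑ i, C i j = (α : ℂ) • B j +
            (((1 - α : ℝ) : ℂ) * ((B j).trace / (Fintype.card n : ℂ))) • 1)} =
      sInf {r : ℝ | ∃ (X : ι → Matrix n n ℂ) (Y : κ → Matrix n n ℂ),
        (∀ i, (X i).IsHermitian) ∧ (∀ j, (Y j).IsHermitian) ∧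
        (∀ i j, (X i + Y j).PosSemidef) ∧
        (1 + ∑ i, ((X i * A i).trace).re + ∑ j, ((Y j * B j).trace).re ≥
          ∑ i, ((X i).trace).re * ((A i).trace).re / (Fintype.card n : ℝ) +
            ∑ j, ((Y j).trace).re * ((B j).trace).re / (Fintype.card n : ℝ)) ∧
        r = 1 + ∑ i, ((X i * A i).trace).re + ∑ j, ((Y j * B j).trace).re} := by
  have hEF := depolarized_mem_marginalCone hAtrace hAsum hBtrace hBsum
  simp only [coe_smul_add_smul_one_eq_depolarized]
  simpa [mem_marginalCone_iff_exists_sum_eq, Matrix.nonneg_iff_posSemidef, tracePairing_apply,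
    re_trace_mul_depolarized, hA, hB, add_assoc] using
    sSup_compatible_eq_sInf_tracePairing hA hB hEF

end Robustness

/-- SDP duality for the incompatibility robustness with depolarizing noise. -/
theorem stmt_16 {N d : ℕ} (hN : 1 ≤ N) (hd : 1 ≤ d)
    (A B : Fin N → Matrix (Fin d) (Fin d) ℂ)
    (hA : ∀ i, (A i).PosSemidef) (hAsum : ∑ i, A i = 1)
    (hB : ∀ j, (B j).PosSemidef) (hBsum : ∑ j, B j = 1) :
    sSup {α : ℝ | 0 ≤ α ∧ α ≤ 1 ∧
        ∃ C : Fin N → Fin N → Matrix (Fin d) (Fin d) ℂ,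
          (∀ i j, (C i j).PosSemidef) ∧
          (∀ i, ∑ j, C i j
            = (α : ℂ) • A i + (((1 - α : ℝ) : ℂ) * ((A i).trace / (d : ℂ))) • 1) ∧
          (∀ j, ∑ i, C i j
            = (α : ℂ) • B j + (((1 - α : ℝ) : ℂ) * ((B j).trace / (d : ℂ))) • 1)}
      = sInf {r : ℝ |
          ∃ X Y : Fin N → Matrix (Fin d) (Fin d) ℂ,
            (∀ i, (X i).IsHermitian) ∧ (∀ j, (Y j).IsHermitian) ∧
            (∀ i j, (X i + Y j).PosSemidef) ∧
            (1 + ∑ i, ((X i * A i).trace).re + ∑ j, ((Y j * B j).trace).re ≥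
              ∑ i, ((X i).trace).re * ((A i).trace).re / (d : ℝ)
                + ∑ j, ((Y j).trace).re * ((B j).trace).re / (d : ℝ)) ∧
            r = 1 + ∑ i, ((X i * A i).trace).re + ∑ j, ((Y j * B j).trace).re} := by
  have : NeZero d := ⟨by omega⟩
  simpa using stmt_16_general A B (fun i ↦ (hA i).isHermitian) (fun i ↦ (hA i).trace_nonneg)
    (by simp [← Matrix.trace_sum, hAsum]) (fun j ↦ (hB j).isHermitian) (fun j ↦ (hB j).trace_nonneg)
    (by simp [← Matrix.trace_sum, hBsum])
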